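/- arXiv:2006.10324 — 2 statements merged into one kernel-verified Lean document; each statement's English description precedes it below -/
import Mathlib

section
/- Let F be a field of characteristic different from 2, V an F-vector space of dimension n ≥ 3, and X : V^{n−1} → V an alternating (n−1)-fold cross product relative to a nondegenerate symmetric bilinear form b. Then an invertible linear map φ : V → V satisfies φ(X(v₁,…,v_{n−1})) = X(φ(v₁),…,φ(v_{n−1})) for all v₁,…,v_{n−1} ∈ V if and only if b(φ(u), φ(v)) = det(φ)·b(u, v) for all u, v ∈ V. -/
/-!
Write `n = m + 1`. The form `D (w, v₁, …, v_m) = b w (X v)` is an alternating `n`-form on the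
`n`-dimensional space `V` (`crossForm`), so that `D (φ w, φ v₁, …) = det φ * D (w, v₁, …)`; that is,
`b (φ w) (X (φ v)) = det φ * b w (X v)` for every linear `φ` (`crossForm_comp`).

If `φ` scales `b` by `det φ`, this identity says that `φ (X v)` and `X (φ v)` have the same pairing
with every vector `φ w`, hence agree. Conversely, if `φ` commutes with `X`, it says that
`b (φ w) (φ u) = det φ * b w u` for every `u` in the image of `X`. That image spans `V`: for an
orthogonal basis `e` of `V` (which exists in characteristic different from 2), the cross product of
all the `e j` with `j ≠ i` is orthogonal to these vectors, hence a multiple of `e i`, and it is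
nonzero because its norm is the product of the nonzero scalars `b (e j) (e j)`, `j ≠ i`.
-/

/-- An `r`-fold cross product on `V` relative to the bilinear form `b`. -/
def IsCrossProduct {F V : Type*} [Field F] [AddCommGroup V] [Module F V] {r : ℕ}
    (b : LinearMap.BilinForm F V) (X : MultilinearMap F (fun _ : Fin r => V) V) : Prop :=
  (∀ v : Fin r → V, ∀ i : Fin r, b (X v) (v i) = 0) ∧
  (∀ v : Fin r → V, b (X v) (X v) = (Matrix.of fun i j : Fin r => b (v i) (v j)).det)

section CrossProduct

variable {F V : Type*} [Field F] [AddCommGroup V] [Module F V] {m : ℕ}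

/-- The alternating form `(w, v₁, …, v_m) ↦ b w (X v)` attached to an alternating cross product.
The vector paired with the cross product is put in position `0`. -/
def crossForm (b : LinearMap.BilinForm F V) (hbsymm : ∀ u v : V, b u v = b v u)
    (X : MultilinearMap F (fun _ : Fin m => V) V)
    (halt : ∀ (v : Fin m → V) (i j : Fin m), i ≠ j → v i = v j → X v = 0)
    (hX : IsCrossProduct b X) : V [⋀^Fin (m + 1)]→ₗ[F] F where
  __ := LinearMap.uncurryLeft (M := fun _ : Fin (m + 1) => V)
    { toFun := fun w => (b w).compMultilinearMap X
      map_add' := fun x y => by ext; simp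
      map_smul' := fun c x => by ext; simp }
  map_eq_zero_of_eq' := by
    intro v i j hv hij
    change b (v 0) (X (Fin.tail v)) = 0
    induction i using Fin.cases with
    | zero =>
      induction j using Fin.cases with
      | zero => exact absurd rfl hij
      | succ j => rw [hbsymm, hv]; exact hX.1 (Fin.tail v) j
    | succ i =>
      induction j using Fin.cases with
      | zero => rw [hbsymm, ← hv]; exact hX.1 (Fin.tail v) i
      | succ j =>
        rw [halt (Fin.tail v) i j (fun h => hij (by rw [h])) hv, map_zero]

/-- The form `crossForm` has top degree, so a linear map multiplies it by its determinant. -/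
lemma crossForm_comp [FiniteDimensional F V] (hdim : Module.finrank F V = m + 1)
    (b : LinearMap.BilinForm F V) (hbsymm : ∀ u v : V, b u v = b v u)
    (X : MultilinearMap F (fun _ : Fin m => V) V)
    (halt : ∀ (v : Fin m → V) (i j : Fin m), i ≠ j → v i = v j → X v = 0)
    (hX : IsCrossProduct b X) (φ : V →ₗ[F] V) (w : V) (v : Fin m → V) :
    b (φ w) (X fun i => φ (v i)) = LinearMap.det φ * b w (X v) := by
  let D := crossForm b hbsymm X halt hX
  let e := Module.finBasisOfFinrankEq F V hdim
  have hD : ∀ u : Fin (m + 1) → V, D (φ ∘ u) = LinearMap.det φ * D u := by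
    intro u
    rw [D.eq_smul_basis_det e, AlternatingMap.smul_apply, AlternatingMap.smul_apply,
      Module.Basis.det_comp, smul_eq_mul, smul_eq_mul]
    ring
  exact hD (Fin.cons w v)

/-- The cross product of all but one of the vectors of an orthogonal basis is a nonzero multiple
of the omitted vector. -/
lemma exists_crossProduct_eq_smul (b : LinearMap.BilinForm F V) (hbnd : b.Nondegenerate)
    (X : MultilinearMap F (fun _ : Fin m => V) V) (hX : IsCrossProduct b X)
    (e : Module.Basis (Fin (m + 1)) F V) (he : LinearMap.IsOrthoᵢ b e) (i : Fin (m + 1)) :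
    ∃ c : F, c ≠ 0 ∧ X (fun k => e (i.succAbove k)) = c • e i := by
  set x := X (fun k => e (i.succAbove k)) with hx
  have hne : ∀ j, b (e j) (e j) ≠ 0 := fun j => he.not_isOrtho_basis_self_of_separatingLeft hbnd.1 j
  have hcoord : ∀ j, b x (e j) = e.repr x j * b (e j) (e j) := by
    intro j
    conv_lhs => rw [← e.sum_repr x]
    rw [map_sum, LinearMap.sum_apply, Finset.sum_eq_single j]
    · simp
    · intro k _ hk
      have : b (e k) (e j) = 0 := he hk
      simp [this]
    · simp
  have hzero : ∀ j, j ≠ i → e.repr x j = 0 := by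
    intro j hj
    obtain ⟨k, rfl⟩ := Fin.exists_succAbove_eq hj
    have h0 : b x (e (i.succAbove k)) = 0 := hX.1 _ k
    rw [hcoord] at h0
    exact (mul_eq_zero.mp h0).resolve_right (hne _)
  have hxe : x = e.repr x i • e i := by
    conv_lhs => rw [← e.sum_repr x]
    exact Finset.sum_eq_single i (fun j _ hj => by rw [hzero j hj, zero_smul]) (by simp)
  refine ⟨e.repr x i, fun hc => ?_, hxe⟩
  have hx0 : x = 0 := by rw [hxe, hc, zero_smul]
  -- The Gram matrix of an orthogonal family is diagonal, here with nonzero diagonal entries.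
  have hgram := hX.2 (fun k => e (i.succAbove k))
  have hdiag : (Matrix.of fun k l : Fin m => b (e (i.succAbove k)) (e (i.succAbove l))) =
      Matrix.diagonal fun k => b (e (i.succAbove k)) (e (i.succAbove k)) := by
    ext k l
    by_cases hkl : k = l
    · subst hkl; simp
    · rw [Matrix.diagonal_apply_ne _ hkl]
      exact he (fun h => hkl (Fin.succAbove_right_injective h))
  rw [← hx, hx0, map_zero, hdiag, Matrix.det_diagonal] at hgram
  exact Finset.prod_ne_zero_iff.mpr (fun k _ => hne _) hgram.symm

end CrossProduct

/-- an invertible linear map `φ` is an automorphism of an alternating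
`(n-1)`-fold cross product `(V, X)` if and only if `b(φu, φv) = det(φ)·b(u,v)` for all
`u, v`. -/
theorem stmt7 (F V : Type*) [Field F] [AddCommGroup V] [Module F V] [FiniteDimensional F V]
    (hchar : (2 : F) ≠ 0)
    (n : ℕ) (hn : 3 ≤ n) (hdim : Module.finrank F V = n)
    (b : LinearMap.BilinForm F V)
    (hbnd : b.Nondegenerate) (hbsymm : ∀ u v : V, b u v = b v u)
    (X : MultilinearMap F (fun _ : Fin (n - 1) => V) V)
    (halt : ∀ (v : Fin (n - 1) → V) (i j : Fin (n - 1)), i ≠ j → v i = v j → X v = 0)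
    (hX : IsCrossProduct b X)
    (φ : V ≃ₗ[F] V) :
    (∀ v : Fin (n - 1) → V, φ (X v) = X (fun i => φ (v i))) ↔
    (∀ u w : V, b (φ u) (φ w) = LinearMap.det (φ : V →ₗ[F] V) * b u w) := by
  obtain ⟨m, rfl⟩ : ∃ m, n = m + 1 := ⟨n - 1, by omega⟩
  have key : ∀ (w : V) (v : Fin (m + 1 - 1) → V), b (φ w) (X fun i => φ (v i)) =
      LinearMap.det (φ : V →ₗ[F] V) * b w (X v) :=
    crossForm_comp (m := m) hdim b hbsymm X halt hX φ
  constructor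
  · intro h u w
    let : Invertible (2 : F) := invertibleOfNonzero hchar
    obtain ⟨e', he'⟩ := LinearMap.BilinForm.exists_orthogonal_basis (B := b) ⟨hbsymm⟩
    let e := e'.reindex (finCongr hdim)
    have he : LinearMap.IsOrthoᵢ b e := by
      intro i j hij
      simp only [e, Function.onFun, Module.Basis.reindex_apply]
      exact he' (fun h => hij ((finCongr hdim).symm.injective h))
    have hext : (b (φ u)).comp (φ : V →ₗ[F] V) = LinearMap.det (φ : V →ₗ[F] V) • b u := by
      refine e.ext fun i => ?_
      obtain ⟨c, hc, hcX⟩ := exists_crossProduct_eq_smul (m := m) b hbnd X hX e he i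
      have hk := key u (fun k => e (i.succAbove k))
      rw [← h] at hk
      erw [hcX] at hk
      rw [map_smul, map_smul, map_smul, smul_eq_mul, smul_eq_mul, mul_left_comm] at hk
      exact mul_left_cancel₀ hc hk
    exact LinearMap.congr_fun hext w
  · intro h v
    rw [← sub_eq_zero]
    refine hbnd.2 _ fun y => ?_
    obtain ⟨w, rfl⟩ := φ.surjective y
    rw [map_sub, h, key, sub_self]
end

section
/- Let F be a field of characteristic different from 2 containing an element i with i² = −1, and let X be a 1-fold cross product on V relative to b. Set V₊ = {v ∈ V : X(v) = i·v} and V₋ = {v ∈ V : X(v) = −i·v}, and let Aut(V, X) = {φ ∈ GL(V) : φ ∘ X = X ∘ φ}. Then: (1) every φ ∈ Aut(V, X) preserves V₊ and V₋, and the map φ ↦ (φ|_{V₊}, φ|_{V₋}) is a group isomorphism Aut(V, X) ≅ GL(V₊) × GL(V₋); (2) the map φ ↦ φ|_{V₊} is a group isomorphism from {φ ∈ Aut(V, X) : b(φ(u), φ(v)) = b(u, v) for all u, v ∈ V} onto GL(V₊). -/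
/-!
Polarising the two axioms of a 1-fold cross product gives `b (X u) v = -b u (X v)` and
`b (X u) (X v) = b u v`; nondegeneracy then forces `X ^ 2 = -1`. Since `i ^ 2 = -1`, the space `V` is
the direct sum of the eigenspaces `V₊` and `V₋`, the projection to `V₊` being `v ↦ (v - i X v) / 2`.
An automorphism commutes with `X` exactly when it is block diagonal for this decomposition
(`exists_blockDiagonal` glues the two blocks), which is the first isomorphism.

Both eigenspaces are totally isotropic, as `b u v = b (X u) (X v) = i ^ 2 b u v = -b u v` on each of
them, so `b` pairs `V₊` with `V₋` perfectly. An isometry is therefore determined by its restriction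
to `V₊`. Conversely, a given `g ∈ GL(V₊)` is extended by `ψ ∘ σ`, where `ψ = g ⊕ 1` and `σ` is the
inverse of the `b`-adjoint of `ψ` (`exists_adjointInverse`); `σ` is the identity on `V₊` and the
contragredient of `g` on `V₋`.
-/

/-- A 1-fold cross product on `V` relative to `b`, viewed as a linear endomorphism. -/
def IsOneFoldCrossProduct {F V : Type*} [Field F] [AddCommGroup V] [Module F V]
    (b : LinearMap.BilinForm F V) (X : V →ₗ[F] V) : Prop :=
  (∀ v : V, b (X v) v = 0) ∧ (∀ v : V, b (X v) (X v) = b v v)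

/-- A group of automorphisms preserving `p` acts on `p` by restriction. -/
theorem exists_restrictHom {F V : Type*} [Field F] [AddCommGroup V] [Module F V]
    (H : Subgroup (V ≃ₗ[F] V)) (p : Submodule F V) (hp : ∀ φ ∈ H, ∀ x ∈ p, φ x ∈ p) :
    ∃ r : H →* (p ≃ₗ[F] p), ∀ (φ : H) (x : p), (r φ x : V) = φ.1 (x : V) := by
  let f (φ : H) : p ≃ₗ[F] p :=
    LinearEquiv.ofLinearMap
      ((φ.1 : V →ₗ[F] V).restrict (hp φ.1 φ.2))
      (((φ⁻¹ : H).1 : V →ₗ[F] V).restrict (hp (φ⁻¹ : H).1 (φ⁻¹ : H).2))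
      (by
        ext x
        exact φ.1.apply_symm_apply (x : V))
      (by
        ext x
        exact φ.1.symm_apply_apply (x : V))
  exact ⟨MonoidHom.mk' f fun φ ψ => by ext x; rfl, fun φ x => rfl⟩

theorem exists_blockDiagonal {F V : Type*} [Field F] [AddCommGroup V] [Module F V]
    {p q : Submodule F V} (hpq : IsCompl p q) (g : p ≃ₗ[F] p) (h : q ≃ₗ[F] q) :
    ∃ ψ : V ≃ₗ[F] V, (∀ x : p, ψ x = g x) ∧ (∀ x : q, ψ x = h x) := by
  let E := Submodule.prodEquivOfIsCompl p q hpq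
  refine ⟨E.symm ≪≫ₗ (g.prodCongr h) ≪≫ₗ E, fun x => ?_, fun x => ?_⟩
  · simp [E]
  · simp [E]

/-- The inverse `σ` of the `b`-adjoint of `ψ`. -/
theorem exists_adjointInverse {F V : Type*} [Field F] [AddCommGroup V] [Module F V]
    [FiniteDimensional F V] (b : LinearMap.BilinForm F V) (hb : b.Nondegenerate)
    (ψ : V ≃ₗ[F] V) : ∃ σ : V ≃ₗ[F] V, ∀ x y, b (σ x) (ψ y) = b x y := by
  let D := b.toDual hb
  refine ⟨D ≪≫ₗ ψ.symm.dualMap ≪≫ₗ D.symm, fun x y => ?_⟩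
  simp [D, LinearMap.BilinForm.apply_toDual_symm_apply, LinearMap.BilinForm.toDual_def]

section CrossProduct

variable {F V : Type*} [Field F] [AddCommGroup V] [Module F V] {b : LinearMap.BilinForm F V}
  {X : V →ₗ[F] V}

theorem IsOneFoldCrossProduct.skew (hX : IsOneFoldCrossProduct b X)
    (hs : ∀ u v : V, b u v = b v u) (u v : V) : b (X u) v = -b u (X v) := by
  have h := hX.1 (u + v)
  simp only [map_add, LinearMap.add_apply, hX.1, zero_add, add_zero] at h
  rw [hs u (X v)]
  linear_combination h

theorem IsOneFoldCrossProduct.isometry (hX : IsOneFoldCrossProduct b X) (h2 : (2 : F) ≠ 0)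
    (hs : ∀ u v : V, b u v = b v u) (u v : V) : b (X u) (X v) = b u v := by
  have h := hX.2 (u + v)
  simp only [map_add, LinearMap.add_apply, hX.2] at h
  rw [hs (X v) (X u), hs v u] at h
  apply mul_left_cancel₀ h2
  linear_combination h

theorem eq_of_forall_bilin (hb : b.Nondegenerate) {x y : V} (h : ∀ w, b x w = b y w) :
    x = y := by
  rw [← sub_eq_zero]
  apply hb.1
  intro w
  simp [h w]

theorem IsOneFoldCrossProduct.apply_apply (hX : IsOneFoldCrossProduct b X) (h2 : (2 : F) ≠ 0)
    (hb : b.Nondegenerate) (hs : ∀ u v : V, b u v = b v u) (u : V) : X (X u) = -u := by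
  apply eq_of_forall_bilin hb
  intro w
  rw [hX.skew hs, hX.isometry h2 hs, map_neg, LinearMap.neg_apply]

/-- Any eigenspace of `X` whose eigenvalue squares to `-1` is totally isotropic. -/
theorem IsOneFoldCrossProduct.isotropic (hX : IsOneFoldCrossProduct b X) (h2 : (2 : F) ≠ 0)
    (hs : ∀ u v : V, b u v = b v u) {c : F} (hc : c ^ 2 = -1) {u v : V}
    (hu : X u = c • u) (hv : X v = c • v) : b u v = 0 := by
  have h := hX.isometry h2 hs u v
  rw [hu, hv] at h
  simp only [map_smul, LinearMap.smul_apply, smul_eq_mul] at h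
  apply (mul_eq_zero.mp (?_ : 2 * b u v = 0)).resolve_left h2
  linear_combination b u v * hc - h

end CrossProduct

/-- with `V₊`, `V₋` the `±i` eigenspaces of the 1-fold cross product `X`,
any `A = Aut(V, X)` preserves `V₊` and `V₋`, restriction gives a group isomorphism
`Aut(V, X) ≅ GL(V₊) × GL(V₋)`, and restriction to `V₊` gives a group isomorphism of the
subgroup of `b`-isometries of `Aut(V, X)` onto `GL(V₊)`. -/
theorem stmt13 (F V : Type*) [Field F] [AddCommGroup V] [Module F V] [FiniteDimensional F V]
    (hchar : (2 : F) ≠ 0) (i : F) (hi : i ^ 2 = -1)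
    (b : LinearMap.BilinForm F V)
    (hbnd : b.Nondegenerate) (hbsymm : ∀ u v : V, b u v = b v u)
    (X : V →ₗ[F] V) (hX : IsOneFoldCrossProduct b X)
    (Vp Vm : Submodule F V)
    (hVp : ∀ v : V, v ∈ Vp ↔ X v = i • v)
    (hVm : ∀ v : V, v ∈ Vm ↔ X v = (-i) • v)
    (A : Subgroup (V ≃ₗ[F] V))
    (hA : ∀ φ : V ≃ₗ[F] V, φ ∈ A ↔ ∀ v : V, φ (X v) = X (φ v)) :
    (∀ φ ∈ A, (∀ x ∈ Vp, φ x ∈ Vp) ∧ (∀ x ∈ Vm, φ x ∈ Vm)) ∧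
    (∃ e : A ≃* (Vp ≃ₗ[F] Vp) × (Vm ≃ₗ[F] Vm),
      ∀ φ : A, (∀ x : Vp, ((e φ).1 x : V) = φ.1 (x : V)) ∧
        (∀ x : Vm, ((e φ).2 x : V) = φ.1 (x : V))) ∧
    (∀ B : Subgroup (V ≃ₗ[F] V),
      (∀ φ : V ≃ₗ[F] V, φ ∈ B ↔ (φ ∈ A ∧ ∀ u v : V, b (φ u) (φ v) = b u v)) →
      ∃ e : B ≃* (Vp ≃ₗ[F] Vp), ∀ φ : B, ∀ x : Vp, ((e φ) x : V) = φ.1 (x : V)) := by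
  have hc : (-i) ^ 2 = -1 := by rw [neg_sq, hi]
  have hXX := hX.apply_apply hchar hbnd hbsymm
  have hsk := hX.skew hbsymm
  have hpp : ∀ u ∈ Vp, ∀ v ∈ Vp, b u v = 0 := fun u hu v hv =>
    hX.isotropic hchar hbsymm hi ((hVp u).1 hu) ((hVp v).1 hv)
  have hmm : ∀ u ∈ Vm, ∀ v ∈ Vm, b u v = 0 := fun u hu v hv =>
    hX.isotropic hchar hbsymm hc ((hVm u).1 hu) ((hVm v).1 hv)
  have hdec : ∀ v : V, ∃ x ∈ Vp, ∃ y ∈ Vm, v = x + y := by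
    intro v
    refine ⟨(2 : F)⁻¹ • (v - i • X v), ?_, (2 : F)⁻¹ • (v + i • X v), ?_, ?_⟩
    · rw [hVp]
      simp only [map_smul, map_sub, hXX]
      match_scalars
      · linear_combination (2 : F)⁻¹ * hi
      · ring
    · rw [hVm]
      simp only [map_smul, map_add, hXX]
      match_scalars
      · linear_combination (2 : F)⁻¹ * hi
      · ring
    · match_scalars <;> field_simp <;> ring
  have hcompl : IsCompl Vp Vm := by
    constructor
    · rw [Submodule.disjoint_def]
      intro x hx hx'
      rw [hVp] at hx
      rw [hVm, hx] at hx'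
      have h : (2 * i) • x = 0 := by
        rw [two_mul, add_smul]
        nth_rw 1 [hx']
        simp
      have hi0 : i ≠ 0 := by
        rintro rfl
        simp at hi
      exact (smul_eq_zero.1 h).resolve_left (mul_ne_zero hchar hi0)
    · rw [codisjoint_iff, eq_top_iff]
      intro v _
      obtain ⟨x, hx, y, hy, rfl⟩ := hdec v
      exact Submodule.add_mem_sup hx hy
  have hpres : ∀ φ ∈ A, (∀ x ∈ Vp, φ x ∈ Vp) ∧ (∀ x ∈ Vm, φ x ∈ Vm) := by
    intro φ hφ
    rw [hA] at hφ
    constructor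
    · intro x hx
      rw [hVp] at hx ⊢
      rw [← hφ, hx, map_smul]
    · intro x hx
      rw [hVm] at hx ⊢
      rw [← hφ, hx, map_smul]
  -- gluing two blocks yields an element of `A`
  have hglue : ∀ (g : Vp ≃ₗ[F] Vp) (h : Vm ≃ₗ[F] Vm), ∃ ψ ∈ A,
      (∀ x : Vp, ψ x = g x) ∧ (∀ x : Vm, ψ x = h x) := by
    intro g h
    obtain ⟨ψ, hψp, hψm⟩ := exists_blockDiagonal hcompl g h
    refine ⟨ψ, (hA ψ).2 fun v => ?_, hψp, hψm⟩
    obtain ⟨x, hx, y, hy, rfl⟩ := hdec v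
    have h1 : ψ x ∈ Vp := by rw [hψp ⟨x, hx⟩]; exact (g _).2
    have h2 : ψ y ∈ Vm := by rw [hψm ⟨y, hy⟩]; exact (h _).2
    simp only [map_add, (hVp x).1 hx, (hVm y).1 hy, (hVp _).1 h1, (hVm _).1 h2, map_smul]
  refine ⟨hpres, ?_, ?_⟩
  · obtain ⟨r, hr⟩ := exists_restrictHom A Vp fun φ hφ => (hpres φ hφ).1
    obtain ⟨s, hs⟩ := exists_restrictHom A Vm fun φ hφ => (hpres φ hφ).2
    have hbij : Function.Bijective (r.prod s) := by
      constructor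
      · intro φ ψ h
        rw [MonoidHom.prod_apply, MonoidHom.prod_apply, Prod.mk.injEq] at h
        ext v
        obtain ⟨x, hx, y, hy, rfl⟩ := hdec v
        rw [map_add, map_add, ← hr φ ⟨x, hx⟩, ← hr ψ ⟨x, hx⟩, ← hs φ ⟨y, hy⟩, ← hs ψ ⟨y, hy⟩,
          h.1, h.2]
      · rintro ⟨g, h⟩
        obtain ⟨ψ, hψ, hg, hh⟩ := hglue g h
        refine ⟨⟨ψ, hψ⟩, ?_⟩
        rw [MonoidHom.prod_apply, Prod.mk.injEq]
        constructor
        · ext x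
          rw [hr, hg]
        · ext x
          rw [hs, hh]
    exact ⟨MulEquiv.ofBijective _ hbij, fun φ => ⟨hr φ, hs φ⟩⟩
  · intro B hB
    have hBA : ∀ φ ∈ B, φ ∈ A := fun φ hφ => ((hB φ).1 hφ).1
    obtain ⟨r, hr⟩ := exists_restrictHom B Vp fun φ hφ => (hpres φ (hBA φ hφ)).1
    have hbij : Function.Bijective r := by
      constructor
      · rw [injective_iff_map_eq_one]
        intro φ h
        have hp1 : ∀ x ∈ Vp, φ.1 x = x := by
          intro x hx
          rw [← hr φ ⟨x, hx⟩, h]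
          rfl
        ext v
        obtain ⟨x, hx, y, hy, rfl⟩ := hdec v
        -- `φ y` and `y` pair equally with `V₊` because `φ` fixes `V₊`, and both are orthogonal to `V₋`
        have hm1 : φ.1 y = y := by
          apply eq_of_forall_bilin hbnd
          intro w
          obtain ⟨u, hu, z, hz, rfl⟩ := hdec w
          rw [map_add, map_add, hmm _ ((hpres _ (hBA _ φ.2)).2 y hy) z hz, hmm y hy z hz]
          nth_rw 1 [← hp1 u hu]
          rw [((hB _).1 φ.2).2]
        rw [map_add, hp1 x hx, hm1]
        rfl
      · intro g
        obtain ⟨ψ, hψ, hg, hh⟩ := hglue g 1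
        obtain ⟨σ, hσ⟩ := exists_adjointInverse b hbnd ψ
        have hψ1 : ∀ y ∈ Vm, ψ y = y := fun y hy => hh ⟨y, hy⟩
        have hσA : σ ∈ A := by
          rw [hA] at hψ ⊢
          intro v
          apply eq_of_forall_bilin hbnd
          intro w
          obtain ⟨w, rfl⟩ := ψ.surjective w
          rw [hσ, hsk, hsk, ← hψ, hσ]
        have hσ1 : ∀ x ∈ Vp, σ x = x := by
          intro x hx
          apply eq_of_forall_bilin hbnd
          intro w
          obtain ⟨w, rfl⟩ := ψ.surjective w
          rw [hσ]
          obtain ⟨u, hu, z, hz, rfl⟩ := hdec w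
          rw [map_add, map_add, map_add, hψ1 z hz, hpp x hx u hu,
            hpp x hx _ ((hpres ψ hψ).1 u hu)]
        have hφA : ψ * σ ∈ A := A.mul_mem hψ hσA
        have hφB : ψ * σ ∈ B := by
          refine (hB _).2 ⟨hφA, fun u v => ?_⟩
          have hmix : ∀ x ∈ Vp, ∀ y ∈ Vm, b ((ψ * σ) x) ((ψ * σ) y) = b x y := by
            intro x hx y hy
            rw [LinearEquiv.mul_apply, LinearEquiv.mul_apply, hσ1 x hx,
              hψ1 _ ((hpres σ hσA).2 y hy), hbsymm, hσ, hbsymm]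
          obtain ⟨x, hx, y, hy, rfl⟩ := hdec u
          obtain ⟨z, hz, w, hw, rfl⟩ := hdec v
          have hP := (hpres _ hφA).1
          have hM := (hpres _ hφA).2
          simp only [map_add, LinearMap.add_apply]
          rw [hmix x hx w hw, hbsymm ((ψ * σ) y) ((ψ * σ) z), hmix z hz y hy, hbsymm y z,
            hpp _ (hP x hx) _ (hP z hz), hpp x hx z hz,
            hmm _ (hM y hy) _ (hM w hw), hmm y hy w hw]
        refine ⟨⟨ψ * σ, hφB⟩, ?_⟩
        ext x
        rw [hr, LinearEquiv.mul_apply, hσ1 x x.2, hg]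
    exact ⟨MulEquiv.ofBijective _ hbij, hr⟩
end
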